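/- arXiv:1007.0564 — 2 statements merged into one kernel-verified Lean document; each statement's English description precedes it below -/
import Mathlib

section
/- For every tempered distribution T ∈ S′(ℝ^d) there exists n ∈ ℕ such that ‖T‖_{−n}² := Σ_{β∈ℕ^d} (2|β|+d)^{−2n} T(h_β)² < ∞. -/
open MeasureTheory

noncomputable def hermitePoly (n : ℕ) (x : ℝ) : ℝ :=
  (-1 : ℝ) ^ n * Real.exp (x ^ 2 / 2) *
    iteratedDeriv n (fun y : ℝ => Real.exp (-(y ^ 2 / 2))) x

noncomputable def hermiteFun (n : ℕ) (x : ℝ) : ℝ :=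
  (Real.sqrt (Real.sqrt (2 * Real.pi) * n.factorial))⁻¹ *
    Real.exp (-(x ^ 2 / 4)) * hermitePoly n x

noncomputable def hermiteFunMulti (d : ℕ) (α : Fin d → ℕ) (x : EuclideanSpace ℝ (Fin d)) : ℝ :=
  ∏ i, hermiteFun (α i) (x i)
open Polynomial in
theorem hfa_derivative_hermite (n : ℕ) :
    derivative (hermite (n + 1)) = ((n : ℤ[X]) + 1) * hermite n := by
  induction n with
  | zero => simp [hermite_succ]
  | succ k ih =>
    rw [hermite_succ (k + 1), derivative_sub, derivative_mul, ih, derivative_X, derivative_mul]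
    have h1 : derivative ((k : ℤ[X]) + 1) = 0 := by simp
    rw [h1, hermite_succ k]
    push_cast
    ring

theorem hfa_poly (n : ℕ) (x : ℝ) :
    hermitePoly n x = Polynomial.aeval x (Polynomial.hermite n) := by
  unfold hermitePoly
  rw [Polynomial.hermite_eq_deriv_gaussian', iteratedDeriv_eq_iterate]
  ring

theorem hfa_poly_succ_succ (n : ℕ) (x : ℝ) :
    hermitePoly (n + 2) x = x * hermitePoly (n + 1) x - (n + 1) * hermitePoly n x := by
  simp only [hfa_poly]
  rw [Polynomial.hermite_succ (n + 1), hfa_derivative_hermite]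
  simp

theorem hfa_poly_hasDerivAt (n : ℕ) (x : ℝ) :
    HasDerivAt (hermitePoly n) (x * hermitePoly n x - hermitePoly (n + 1) x) x := by
  have : hermitePoly n = fun x => Polynomial.aeval x (Polynomial.hermite n) := by
    funext y; exact hfa_poly n y
  rw [hfa_poly, hfa_poly, this, Polynomial.hermite_succ]
  refine HasDerivAt.congr_deriv (Polynomial.hasDerivAt_aeval (Polynomial.hermite n) x) ?_
  simp

theorem hfa_coef (n : ℕ) :
    Real.sqrt (n + 1) * (Real.sqrt (Real.sqrt (2 * Real.pi) * (n + 1).factorial))⁻¹ =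
      (Real.sqrt (Real.sqrt (2 * Real.pi) * n.factorial))⁻¹ := by
  have h1 : Real.sqrt (2 * Real.pi) * ((n + 1).factorial : ℝ) =
      ((n : ℝ) + 1) * (Real.sqrt (2 * Real.pi) * n.factorial) := by
    rw [Nat.factorial_succ]; push_cast; ring
  rw [h1, Real.sqrt_mul (by positivity), mul_inv, ← mul_assoc, mul_inv_cancel₀ (by positivity),
    one_mul]

/-- three term recursion -/
theorem hfa_rec (n : ℕ) (x : ℝ) :
    x * hermiteFun (n + 1) x = Real.sqrt (n + 1) * hermiteFun n x +
      Real.sqrt (n + 2) * hermiteFun (n + 2) x := by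
  have c1 := hfa_coef n
  have c2 := hfa_coef (n + 1)
  have e : ((n + 1 : ℕ) : ℝ) + 1 = n + 2 := by push_cast; ring
  rw [e] at c2
  unfold hermiteFun
  rw [hfa_poly_succ_succ, ← c1]
  have hs : Real.sqrt ((n : ℝ) + 1) ^ 2 = n + 1 := Real.sq_sqrt (by positivity)
  have : n + 1 + 1 = n + 2 := rfl
  rw [this] at c2
  rw [← c2]
  linear_combination (-(√(n + 2 : ℝ) * (√(√(2 * Real.pi) * ((n + 2).factorial : ℝ)))⁻¹ * Real.exp (-(x ^ 2 / 4)) * hermitePoly n x)) * hs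

theorem hfa_rec_zero (x : ℝ) : x * hermiteFun 0 x = hermiteFun 1 x := by
  unfold hermiteFun
  simp [hfa_poly]
  ring

theorem hfa_hasDerivAt (n : ℕ) (x : ℝ) :
    HasDerivAt (hermiteFun n)
      (x / 2 * hermiteFun n x - Real.sqrt (n + 1) * hermiteFun (n + 1) x) x := by
  have h1 : HasDerivAt (fun x : ℝ => Real.exp (-(x ^ 2 / 4)))
      (Real.exp (-(x ^ 2 / 4)) * (-(x / 2))) x := by
    apply HasDerivAt.exp
    have := ((hasDerivAt_pow 2 x).div_const 4).neg
    refine HasDerivAt.congr_deriv (this) ?_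
    simp; ring
  have h2 := (h1.const_mul (Real.sqrt (Real.sqrt (2 * Real.pi) * n.factorial))⁻¹).mul
    (hfa_poly_hasDerivAt n x)
  have c := hfa_coef n
  refine HasDerivAt.congr_deriv (h2) ?_
  unfold hermiteFun
  rw [← c]
  ring

theorem hfa_continuous (n : ℕ) : Continuous (hermiteFun n) :=
  continuous_iff_continuousAt.2 fun x => (hfa_hasDerivAt n x).continuousAt

/-- first derivative -/
noncomputable def hfaD (n : ℕ) (x : ℝ) : ℝ :=
  x / 2 * hermiteFun n x - Real.sqrt (n + 1) * hermiteFun (n + 1) x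

theorem hfaD_hasDerivAt (n : ℕ) (x : ℝ) :
    HasDerivAt (hfaD n) ((x ^ 2 / 4 - n - 1 / 2) * hermiteFun n x) x := by
  have h1 := (((hasDerivAt_id x).div_const 2).mul (hfa_hasDerivAt n x)).sub
    ((hfa_hasDerivAt (n + 1) x).const_mul (Real.sqrt (n + 1)))
  refine HasDerivAt.congr_deriv (h1) ?_
  have r := hfa_rec n x
  have hs : Real.sqrt ((n : ℝ) + 1) ^ 2 = n + 1 := Real.sq_sqrt (by positivity)
  have e : ((n + 1 : ℕ) : ℝ) + 1 = n + 2 := by push_cast; ring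
  rw [e]
  simp only [id]
  linear_combination (-hermiteFun n x) * hs - √(n + 1 : ℝ) * r

noncomputable def hfaE (n : ℕ) (x : ℝ) : ℝ :=
  hfaD n x ^ 2 + (n + 1 / 2 - x ^ 2 / 4) * hermiteFun n x ^ 2

theorem hfaE_hasDerivAt (n : ℕ) (x : ℝ) :
    HasDerivAt (hfaE n) (-(x / 2) * hermiteFun n x ^ 2) x := by
  have h1 := ((hfaD_hasDerivAt n x).pow 2).add
    (((((hasDerivAt_pow 2 x).div_const 4).const_sub ((n : ℝ) + 1 / 2))).mul
      ((hfa_hasDerivAt n x).pow 2))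
  refine HasDerivAt.congr_deriv (h1) ?_
  simp [hfaD]
  ring

theorem hfaE_le (n : ℕ) (x : ℝ) : hfaE n x ≤ hfaE n 0 := by
  have hc : Continuous (hfaE n) :=
    continuous_iff_continuousAt.2 fun x => (hfaE_hasDerivAt n x).continuousAt
  rcases le_total 0 x with hx | hx
  · have : AntitoneOn (hfaE n) (Set.Ici 0) := by
      apply antitoneOn_of_deriv_nonpos (convex_Ici 0) hc.continuousOn
      · exact fun y _ => (hfaE_hasDerivAt n y).differentiableAt.differentiableWithinAt
      · intro y hy
        rw [interior_Ici] at hy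
        rw [(hfaE_hasDerivAt n y).deriv]
        have : 0 < y := hy
        have : 0 ≤ y / 2 * hermiteFun n y ^ 2 := by positivity
        linarith
    exact this (Set.mem_Ici.2 le_rfl) hx hx
  · have : MonotoneOn (hfaE n) (Set.Iic 0) := by
      apply monotoneOn_of_deriv_nonneg (convex_Iic 0) hc.continuousOn
      · exact fun y _ => (hfaE_hasDerivAt n y).differentiableAt.differentiableWithinAt
      · intro y hy
        rw [interior_Iic] at hy
        rw [(hfaE_hasDerivAt n y).deriv]
        have h0 : y < 0 := hy
        have : 0 ≤ -(y / 2) := by linarith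
        positivity
    exact this hx (Set.mem_Iic.2 le_rfl) hx

theorem hfa_zero_le (n : ℕ) : |hermiteFun n 0| ≤ 1 := by
  induction n using Nat.twoStepInduction with
  | zero =>
    have h0 : hermiteFun 0 0 = (Real.sqrt (Real.sqrt (2 * Real.pi)))⁻¹ := by
      simp only [hermiteFun, hfa_poly]; norm_num
    rw [h0, abs_of_nonneg (by positivity)]
    apply inv_le_one_of_one_le₀
    rw [Real.one_le_sqrt, Real.one_le_sqrt]
    nlinarith [Real.pi_gt_three]
  | one => rw [← hfa_rec_zero]; simp
  | more n ih _ =>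
    have r := hfa_rec n 0
    rw [zero_mul] at r
    have h2 : 0 < Real.sqrt ((n : ℝ) + 2) := by positivity
    have h1 : Real.sqrt ((n : ℝ) + 1) ≤ Real.sqrt ((n : ℝ) + 2) :=
      Real.sqrt_le_sqrt (by linarith)
    have h3 : Real.sqrt ((n : ℝ) + 2) * |hermiteFun (n + 2) 0| =
        Real.sqrt ((n : ℝ) + 1) * |hermiteFun n 0| := by
      have e : Real.sqrt ((n : ℝ) + 2) * hermiteFun (n + 2) 0 =
          -(Real.sqrt ((n : ℝ) + 1) * hermiteFun n 0) := by linarith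
      have e2 := congrArg abs e
      rwa [abs_neg, abs_mul, abs_mul, abs_of_pos h2,
        abs_of_nonneg (Real.sqrt_nonneg ((n : ℝ) + 1))] at e2
    have h4 : Real.sqrt ((n : ℝ) + 2) * |hermiteFun (n + 2) 0| ≤ Real.sqrt ((n : ℝ) + 2) * 1 := by
      rw [h3]; gcongr
    exact le_of_mul_le_mul_left h4 h2

theorem hfaE_zero_le (n : ℕ) : hfaE n 0 ≤ 2 * (n + 1) := by
  have h0 := hfa_zero_le n
  have h1 := hfa_zero_le (n + 1)
  rw [← sq_le_one_iff_abs_le_one] at h0 h1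
  have hs : Real.sqrt ((n : ℝ) + 1) ^ 2 = n + 1 := Real.sq_sqrt (by positivity)
  have : hfaE n 0 = (n + 1) * hermiteFun (n + 1) 0 ^ 2 + (n + 1 / 2) * hermiteFun n 0 ^ 2 := by
    rw [← hs]; simp [hfaE, hfaD]; ring
  rw [this]
  have : ((n : ℝ) + 1) * hermiteFun (n + 1) 0 ^ 2 ≤ (n + 1) * 1 := by gcongr
  have : ((n : ℝ) + 1 / 2) * hermiteFun n 0 ^ 2 ≤ (n + 1 / 2) * 1 := by gcongr
  linarith

theorem hfa_inner (n : ℕ) (x : ℝ) (hx : x ^ 2 ≤ 4 * n + 2) :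
    |hermiteFun n x| ≤ 5 * (n + 1) ^ 2 := by
  have hD : ∀ y ∈ Set.uIcc 0 x, ‖hfaD n y‖ ≤ 2 * (n + 1) := by
    intro y hy
    have hyx : y ^ 2 ≤ x ^ 2 := by
      rw [sq_le_sq]
      simpa using Set.abs_sub_left_of_mem_uIcc hy
    have h1 := (hfaE_le n y).trans (hfaE_zero_le n)
    have h2 : 0 ≤ ((n : ℝ) + 1 / 2 - y ^ 2 / 4) * hermiteFun n y ^ 2 := by
      apply mul_nonneg _ (sq_nonneg _); linarith
    unfold hfaE at h1
    rw [Real.norm_eq_abs]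
    apply abs_le_of_sq_le_sq _ (by positivity)
    have : (0 : ℝ) ≤ n := by positivity
    nlinarith
  have hm := (convex_uIcc (0 : ℝ) x).norm_image_sub_le_of_norm_hasDerivWithin_le
    (fun y hy => (hfa_hasDerivAt n y).hasDerivWithinAt) hD Set.left_mem_uIcc Set.right_mem_uIcc
  have hx2 : |x| ≤ 2 * (n + 1) := by
    apply abs_le_of_sq_le_sq _ (by positivity)
    have : (0 : ℝ) ≤ n := by positivity
    nlinarith
  have h0 := hfa_zero_le n
  rw [sub_zero, Real.norm_eq_abs, Real.norm_eq_abs] at hm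
  have h3 : |hermiteFun n x| ≤ |hermiteFun n x - hermiteFun n 0| + |hermiteFun n 0| := by
    simpa using abs_add_le (hermiteFun n x - hermiteFun n 0) (hermiteFun n 0)
  have h4 : 2 * ((n : ℝ) + 1) * |x| ≤ 2 * (n + 1) * (2 * (n + 1)) := by gcongr
  have : (0 : ℝ) ≤ n := by positivity
  nlinarith

open Filter Topology in
theorem hfa_poly_decay (p : Polynomial ℤ) :
    Tendsto (fun x : ℝ => Real.exp (-(x ^ 2 / 4)) * Polynomial.aeval x p) (cocompact ℝ) (𝓝 0) := by
  induction p using Polynomial.induction_on' with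
  | add p q hp hq =>
    have := hp.add hq
    simpa [mul_add] using this
  | monomial k a =>
    have h := tendsto_rpow_abs_mul_exp_neg_mul_sq_cocompact (a := 1 / 4) (by norm_num) k
    have h2 := h.const_mul |(a : ℝ)|
    rw [mul_zero] at h2
    rw [tendsto_zero_iff_abs_tendsto_zero]
    refine h2.congr fun x => ?_
    simp [Polynomial.aeval_monomial, abs_mul, abs_pow]
    ring_nf

open Filter Topology in
theorem hfa_decay (n : ℕ) : Tendsto (hermiteFun n) (cocompact ℝ) (𝓝 0) := by
  have h := (hfa_poly_decay (Polynomial.hermite n)).const_mul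
    (Real.sqrt (Real.sqrt (2 * Real.pi) * n.factorial))⁻¹
  rw [mul_zero] at h
  refine h.congr fun x => ?_
  rw [hermiteFun, hfa_poly]; ring

open Filter Topology in
theorem hfa_bound (n : ℕ) (x : ℝ) : |hermiteFun n x| ≤ 5 * (n + 1) ^ 2 := by
  by_contra! hx
  have hx0 : 0 < |hermiteFun n x| := lt_of_le_of_lt (by positivity) hx
  have hcont : Continuous fun y => hermiteFun n y ^ 2 := (hfa_continuous n).pow 2
  have hdec : Tendsto (fun y => hermiteFun n y ^ 2) (cocompact ℝ) (𝓝 0) := by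
    simpa using (hfa_decay n).pow 2
  have hxs : 0 < hermiteFun n x ^ 2 := by
    rw [← sq_abs]; positivity
  obtain ⟨z, hz⟩ := hcont.exists_forall_ge' x
    ((hdec.eventually_lt_const hxs).mono fun y hy => hy.le)
  have hzx : |hermiteFun n x| ≤ |hermiteFun n z| := sq_le_sq.1 (hz x)
  have hz4 : (4 * n + 2 : ℝ) < z ^ 2 := by
    by_contra! h
    have := hfa_inner n z h
    linarith
  have hd1 : ∀ y, HasDerivAt (fun y => hermiteFun n y ^ 2) (2 * hermiteFun n y * hfaD n y) y := by
    intro y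
    refine HasDerivAt.congr_deriv ((hfa_hasDerivAt n y).pow 2) ?_
    simp [hfaD]
  have hd : deriv (fun y => hermiteFun n y ^ 2) = fun y => 2 * hermiteFun n y * hfaD n y :=
    funext fun y => (hd1 y).deriv
  have hd2 : HasDerivAt (fun y => 2 * hermiteFun n y * hfaD n y)
      (2 * hfaD n z * hfaD n z + 2 * hermiteFun n z * ((z ^ 2 / 4 - n - 1 / 2) * hermiteFun n z))
      z := ((hfa_hasDerivAt n z).const_mul 2).mul (hfaD_hasDerivAt n z)
  have hmax : IsLocalMax (fun y => hermiteFun n y ^ 2) z := Eventually.of_forall hz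
  have hpos : 0 < 2 * hfaD n z * hfaD n z +
      2 * hermiteFun n z * ((z ^ 2 / 4 - n - 1 / 2) * hermiteFun n z) := by
    have h1 : 0 < hermiteFun n z ^ 2 := lt_of_lt_of_le hxs (hz x)
    have h2 : 0 < (z ^ 2 / 4 - n - 1 / 2) * hermiteFun n z ^ 2 :=
      mul_pos (by linarith) h1
    nlinarith [sq_nonneg (hfaD n z)]
  have hmin : IsLocalMin (fun y => hermiteFun n y ^ 2) z := by
    apply isLocalMin_of_deriv_deriv_pos _ hmax.deriv_eq_zero hcont.continuousAt
    rw [hd, hd2.deriv]; exact hpos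
  have hconst : (fun y => hermiteFun n y ^ 2) =ᶠ[𝓝 z] fun _ => hermiteFun n z ^ 2 := by
    filter_upwards [hmin] with y hy
    exact le_antisymm (hz y) hy
  have h3 : deriv (fun y => hermiteFun n y ^ 2) =ᶠ[𝓝 z] deriv fun _ => hermiteFun n z ^ 2 :=
    hconst.deriv
  have h4 := h3.deriv_eq
  rw [hd, hd2.deriv] at h4
  simp at h4
  simp at hpos
  linarith

theorem hfa_mul_eq (n : ℕ) (x : ℝ) :
    x * hermiteFun n x = Real.sqrt n * hermiteFun (n - 1) x +
      Real.sqrt (n + 1) * hermiteFun (n + 1) x := by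
  cases n with
  | zero => simpa using hfa_rec_zero x
  | succ n =>
    rw [hfa_rec]
    push_cast
    ring_nf

theorem hfa_hasDerivAt' (n : ℕ) (x : ℝ) :
    HasDerivAt (hermiteFun n) (Real.sqrt n / 2 * hermiteFun (n - 1) x +
      (-(Real.sqrt (n + 1) / 2)) * hermiteFun (n + 1) x) x := by
  refine HasDerivAt.congr_deriv (hfa_hasDerivAt n x) ?_
  linear_combination (1 / 2) * hfa_mul_eq n x

theorem hfm_update (d : ℕ) (β : Fin d → ℕ) (i : Fin d) (m : ℕ) (x : EuclideanSpace ℝ (Fin d)) :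
    hermiteFunMulti d (Function.update β i m) x =
      (∏ j ∈ Finset.univ.erase i, hermiteFun (β j) (x j)) * hermiteFun m (x i) := by
  unfold hermiteFunMulti
  rw [← Finset.prod_erase_mul _ _ (Finset.mem_univ i)]
  congr 1
  · refine Finset.prod_congr rfl fun j hj => ?_
    rw [Function.update_of_ne (Finset.ne_of_mem_erase hj)]
  · simp

theorem hfm_mul (d : ℕ) (β : Fin d → ℕ) (i : Fin d) (x : EuclideanSpace ℝ (Fin d)) :
    x i * hermiteFunMulti d β x =
      Real.sqrt (β i) * hermiteFunMulti d (Function.update β i (β i - 1)) x +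
      Real.sqrt (β i + 1) * hermiteFunMulti d (Function.update β i (β i + 1)) x := by
  have h0 := hfm_update d β i (β i) x
  rw [Function.update_eq_self] at h0
  rw [hfm_update, hfm_update, h0]
  linear_combination (∏ j ∈ Finset.univ.erase i, hermiteFun (β j) (x j)) * hfa_mul_eq (β i) (x i)

noncomputable def hfmL (d : ℕ) (i : Fin d) (a : ℝ) :
    ℝ →L[ℝ] (EuclideanSpace ℝ (Fin d) →L[ℝ] ℝ) :=
  ContinuousLinearMap.toSpanSingleton ℝ
    (a • (EuclideanSpace.proj i : EuclideanSpace ℝ (Fin d) →L[ℝ] ℝ))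

theorem hfmL_norm (d : ℕ) (i : Fin d) (a : ℝ) : ‖hfmL d i a‖ ≤ |a| := by
  unfold hfmL
  rw [ContinuousLinearMap.norm_toSpanSingleton, norm_smul, Real.norm_eq_abs]
  have : ‖(EuclideanSpace.proj i : EuclideanSpace ℝ (Fin d) →L[ℝ] ℝ)‖ ≤ 1 := by
    refine ContinuousLinearMap.opNorm_le_bound _ zero_le_one fun x => ?_
    rw [one_mul]
    exact PiLp.norm_apply_le x i
  exact mul_le_of_le_one_right (abs_nonneg _) this

theorem hfm_fderiv (d : ℕ) (β : Fin d → ℕ) :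
    fderiv ℝ (hermiteFunMulti d β) = fun x => ∑ i,
      ((hfmL d i (Real.sqrt (β i) / 2) ∘ hermiteFunMulti d (Function.update β i (β i - 1))) x +
      (hfmL d i (-(Real.sqrt (β i + 1) / 2)) ∘
        hermiteFunMulti d (Function.update β i (β i + 1))) x) := by
  funext x
  have h1 : ∀ i ∈ (Finset.univ : Finset (Fin d)),
      HasFDerivAt (fun y : EuclideanSpace ℝ (Fin d) => hermiteFun (β i) (y i))
      ((Real.sqrt (β i) / 2 * hermiteFun (β i - 1) (x i) +
      (-(Real.sqrt (β i + 1) / 2)) * hermiteFun (β i + 1) (x i)) •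
        (EuclideanSpace.proj i : EuclideanSpace ℝ (Fin d) →L[ℝ] ℝ)) x := by
    intro i _
    exact (hfa_hasDerivAt' (β i) (x i)).comp_hasFDerivAt x
      (EuclideanSpace.proj i : EuclideanSpace ℝ (Fin d) →L[ℝ] ℝ).hasFDerivAt
  have h2 := (HasFDerivAt.finsetProd h1).fderiv
  have h3 : hermiteFunMulti d β = fun y => ∏ i, hermiteFun (β i) (y i) := rfl
  rw [h3, h2]
  refine Finset.sum_congr rfl fun i _ => ?_
  simp only [Function.comp, hfmL, ContinuousLinearMap.toSpanSingleton_apply, hfm_update, smul_smul,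
    ← add_smul]
  congr 1
  ring

/-- weight -/
noncomputable def hfw (d : ℕ) (β : Fin d → ℕ) : ℝ := ((∑ i, β i : ℕ) : ℝ) + 1

theorem hfw_one_le (d : ℕ) (β : Fin d → ℕ) : 1 ≤ hfw d β := by
  unfold hfw; simp only [le_add_iff_nonneg_left]; positivity

theorem hfw_coord (d : ℕ) (β : Fin d → ℕ) (i : Fin d) : (β i : ℝ) + 1 ≤ hfw d β := by
  unfold hfw
  have : β i ≤ ∑ i, β i := Finset.single_le_sum (fun _ _ => Nat.zero_le _) (Finset.mem_univ i)
  have : (β i : ℝ) ≤ ((∑ i, β i : ℕ) : ℝ) := by exact_mod_cast this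
  linarith

theorem hfw_update (d : ℕ) (β : Fin d → ℕ) (i : Fin d) (m : ℕ) (hm : m ≤ β i + 1) :
    hfw d (Function.update β i m) ≤ 2 * hfw d β := by
  have h1 : ∑ j, Function.update β i m j ≤ ∑ j, β j + 1 := by
    rw [Finset.sum_update_of_mem (Finset.mem_univ i),
      ← Finset.add_sum_erase _ _ (Finset.mem_univ i), Finset.sdiff_singleton_eq_erase]
    omega
  have h2 : ((∑ j, Function.update β i m j : ℕ) : ℝ) ≤ ((∑ j, β j : ℕ) : ℝ) + 1 := by
    exact_mod_cast h1
  have h3 : (0 : ℝ) ≤ ((∑ j, β j : ℕ) : ℝ) := by positivity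
  unfold hfw
  linarith

theorem hf_sqrt_le (x : ℝ) (hx : 0 ≤ x) : Real.sqrt x ≤ x + 1 := by
  rw [Real.sqrt_le_left (by linarith)]
  nlinarith

theorem hfw_sqrt (d : ℕ) (β : Fin d → ℕ) (i : Fin d) :
    Real.sqrt (β i) ≤ 2 * hfw d β ∧ Real.sqrt (β i + 1) ≤ 2 * hfw d β := by
  have h1 := hfw_coord d β i
  have h0 : (0 : ℝ) ≤ β i := by positivity
  have h2 := hf_sqrt_le (β i) h0
  have h3 := hf_sqrt_le (β i + 1) (by linarith)
  constructor <;> linarith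

theorem hf_norm_le_sum (d : ℕ) (x : EuclideanSpace ℝ (Fin d)) : ‖x‖ ≤ ∑ i, |x i| := by
  have h := (EuclideanSpace.basisFun (Fin d) ℝ).sum_repr x
  calc ‖x‖ = ‖∑ i, (EuclideanSpace.basisFun (Fin d) ℝ).repr x i •
        EuclideanSpace.basisFun (Fin d) ℝ i‖ := by rw [h]
    _ ≤ _ := norm_sum_le _ _
    _ = _ := by simp [norm_smul]

/-- uniform polynomial bound -/
def HfP (d k n : ℕ) : Prop := ∃ C : ℝ, ∃ N : ℕ, 0 ≤ C ∧ ∀ β x,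
  ‖x‖ ^ k * ‖iteratedFDeriv ℝ n (hermiteFunMulti d β) x‖ ≤ C * hfw d β ^ N

theorem hfP_zero_zero (d : ℕ) : HfP d 0 0 := by
  refine ⟨5 ^ d, 2 * d, by positivity, fun β x => ?_⟩
  rw [pow_zero, one_mul, norm_iteratedFDeriv_zero]
  unfold hermiteFunMulti
  rw [norm_prod]
  calc ∏ i, ‖hermiteFun (β i) (x i)‖ ≤ ∏ _i : Fin d, (5 * hfw d β ^ 2) := by
        refine Finset.prod_le_prod (fun _ _ => norm_nonneg _) fun i _ => ?_
        refine (hfa_bound (β i) (x i)).trans ?_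
        have := hfw_coord d β i
        gcongr
    _ = _ := by simp [mul_pow, pow_mul]

theorem hf_step (d : ℕ) (C : ℝ) (N : ℕ) (hC : 0 ≤ C) (β : Fin d → ℕ) (a b : Fin d → ℝ)
    (ha : ∀ i, a i ≤ C * hfw d (Function.update β i (β i - 1)) ^ N)
    (hb : ∀ i, b i ≤ C * hfw d (Function.update β i (β i + 1)) ^ N)
    (s t : Fin d → ℝ) (hs0 : ∀ i, 0 ≤ s i) (ht0 : ∀ i, 0 ≤ t i)
    (hs : ∀ i, s i ≤ 2 * hfw d β) (ht : ∀ i, t i ≤ 2 * hfw d β) :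
    ∑ i, (s i * a i + t i * b i) ≤ (d * (4 * C * 2 ^ N)) * hfw d β ^ (N + 1) := by
  have hw := hfw_one_le d β
  have key : ∀ m i, m ≤ β i + 1 →
      C * hfw d (Function.update β i m) ^ N ≤ C * (2 * hfw d β) ^ N := by
    intro m i hm
    have h1 := hfw_update d β i m hm
    have h2 := hfw_one_le d (Function.update β i m)
    have h3 : 0 ≤ hfw d (Function.update β i m) := by linarith
    gcongr
  have : ∀ i ∈ (Finset.univ : Finset (Fin d)),
      s i * a i + t i * b i ≤ (4 * C * 2 ^ N) * hfw d β ^ (N + 1) := by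
    intro i _
    have hB : 0 ≤ C * (2 * hfw d β) ^ N := by positivity
    have h1 : s i * a i ≤ (2 * hfw d β) * (C * (2 * hfw d β) ^ N) :=
      mul_le_mul_of_nonneg (hs i) ((ha i).trans (key _ i (by omega))) (hs0 i) hB
    have h2 : t i * b i ≤ (2 * hfw d β) * (C * (2 * hfw d β) ^ N) :=
      mul_le_mul_of_nonneg (ht i) ((hb i).trans (key _ i (by omega))) (ht0 i) hB
    calc _ ≤ (2 * hfw d β) * (C * (2 * hfw d β) ^ N) + (2 * hfw d β) * (C * (2 * hfw d β) ^ N) :=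
          add_le_add h1 h2
      _ = _ := by rw [mul_pow]; ring
  refine (Finset.sum_le_sum this).trans (le_of_eq ?_)
  simp
  ring

theorem hfP_zero (d k : ℕ) : HfP d k 0 := by
  induction k with
  | zero => exact hfP_zero_zero d
  | succ k ih =>
    obtain ⟨C, N, hC, h⟩ := ih
    simp only [norm_iteratedFDeriv_zero] at h
    refine ⟨d * (4 * C * 2 ^ N), N + 1, by positivity, fun β x => ?_⟩
    rw [norm_iteratedFDeriv_zero]
    have := hf_step d C N hC β
      (fun i => ‖x‖ ^ k * ‖hermiteFunMulti d (Function.update β i (β i - 1)) x‖)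
      (fun i => ‖x‖ ^ k * ‖hermiteFunMulti d (Function.update β i (β i + 1)) x‖)
      (fun i => h _ x) (fun i => h _ x)
      (fun i => Real.sqrt (β i)) (fun i => Real.sqrt (β i + 1))
      (fun i => Real.sqrt_nonneg _) (fun i => Real.sqrt_nonneg _)
      (fun i => (hfw_sqrt d β i).1) (fun i => (hfw_sqrt d β i).2)
    refine le_trans ?_ this
    calc ‖x‖ ^ (k + 1) * ‖hermiteFunMulti d β x‖
        = ‖x‖ * (‖x‖ ^ k * ‖hermiteFunMulti d β x‖) := by ring
      _ ≤ (∑ i, |x i|) * (‖x‖ ^ k * ‖hermiteFunMulti d β x‖) := by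
          gcongr; exact hf_norm_le_sum d x
      _ = ∑ i, ‖x‖ ^ k * ‖x i * hermiteFunMulti d β x‖ := by
          rw [Finset.sum_mul]
          refine Finset.sum_congr rfl fun i _ => ?_
          rw [norm_mul, Real.norm_eq_abs (x i)]; ring
      _ ≤ _ := by
          refine Finset.sum_le_sum fun i _ => ?_
          rw [hfm_mul]
          have h1 := norm_add_le
            (Real.sqrt (β i) * hermiteFunMulti d (Function.update β i (β i - 1)) x)
            (Real.sqrt (β i + 1) * hermiteFunMulti d (Function.update β i (β i + 1)) x)
          rw [norm_mul, norm_mul, Real.norm_of_nonneg (Real.sqrt_nonneg _),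
            Real.norm_of_nonneg (Real.sqrt_nonneg _)] at h1
          calc _ ≤ ‖x‖ ^ k * _ := mul_le_mul_of_nonneg_left h1 (by positivity)
            _ = _ := by ring

theorem hfP_all (d k n : ℕ) (hsm : ∀ β, ∀ m : ℕ, ContDiff ℝ m (hermiteFunMulti d β)) :
    HfP d k n := by
  induction n with
  | zero => exact hfP_zero d k
  | succ n ih =>
    obtain ⟨C, N, hC, h⟩ := ih
    refine ⟨d * (4 * C * 2 ^ N), N + 1, by positivity, fun β x => ?_⟩
    rw [← norm_iteratedFDeriv_fderiv, hfm_fderiv]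
    have := hf_step d C N hC β
      (fun i => ‖x‖ ^ k *
        ‖iteratedFDeriv ℝ n (hermiteFunMulti d (Function.update β i (β i - 1))) x‖)
      (fun i => ‖x‖ ^ k *
        ‖iteratedFDeriv ℝ n (hermiteFunMulti d (Function.update β i (β i + 1))) x‖)
      (fun i => h _ x) (fun i => h _ x)
      (fun i => Real.sqrt (β i)) (fun i => Real.sqrt (β i + 1))
      (fun i => Real.sqrt_nonneg _) (fun i => Real.sqrt_nonneg _)
      (fun i => (hfw_sqrt d β i).1) (fun i => (hfw_sqrt d β i).2)
    refine le_trans ?_ this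
    have hcd : ∀ i a γ, ContDiffAt ℝ n (hfmL d i a ∘ hermiteFunMulti d γ) x := fun i a γ =>
      ((hfmL d i a).contDiff.comp (hsm γ n)).contDiffAt
    rw [iteratedFDeriv_fun_sum_apply (fun i _ => (hcd i _ _).add (hcd i _ _))]
    calc _ ≤ ‖x‖ ^ k * ∑ i, _ := mul_le_mul_of_nonneg_left (norm_sum_le _ _) (by positivity)
      _ = ∑ i, ‖x‖ ^ k * _ := Finset.mul_sum _ _ _
      _ ≤ _ := by
        refine Finset.sum_le_sum fun i _ => ?_
        have e := iteratedFDeriv_add_apply (hcd i (Real.sqrt (β i) / 2)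
          (Function.update β i (β i - 1))) (hcd i (-(Real.sqrt (β i + 1) / 2))
          (Function.update β i (β i + 1)))
        have hl : ∀ (a b : ℝ) γ, |a| ≤ b →
            ‖iteratedFDeriv ℝ n (hfmL d i a ∘ hermiteFunMulti d γ) x‖ ≤
            b * ‖iteratedFDeriv ℝ n (hermiteFunMulti d γ) x‖ := by
          intro a b γ hab
          refine ((hfmL d i a).norm_iteratedFDeriv_comp_left (hsm γ n).contDiffAt le_rfl).trans ?_
          gcongr
          exact (hfmL_norm d i a).trans hab
        have s1 := Real.sqrt_nonneg (β i)
        have s2 := Real.sqrt_nonneg ((β i : ℝ) + 1)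
        have h1 := hl (Real.sqrt (β i) / 2) (Real.sqrt (β i)) (Function.update β i (β i - 1))
          (by rw [abs_of_nonneg (by positivity)]; linarith)
        have h2 := hl (-(Real.sqrt (β i + 1) / 2)) (Real.sqrt (β i + 1))
          (Function.update β i (β i + 1))
          (by rw [abs_neg, abs_of_nonneg (by positivity)]; linarith)
        have h3 := (norm_add_le _ _).trans (add_le_add h1 h2)
        rw [← e] at h3
        calc _ ≤ ‖x‖ ^ k * _ := mul_le_mul_of_nonneg_left h3 (by positivity)
          _ = _ := by ring

theorem hf_summable_prod (d : ℕ) :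
    Summable fun β : Fin d → ℕ => ∏ i, (((β i : ℝ) + 1) ^ 2)⁻¹ := by
  induction d with
  | zero => exact Summable.of_finite
  | succ d ih =>
    rw [← (Fin.consEquiv (fun _ => ℕ)).summable_iff]
    have h1 : Summable fun n : ℕ => (((n : ℝ) + 1) ^ 2)⁻¹ := by
      have := (summable_nat_add_iff 1).2 (Real.summable_nat_pow_inv (p := 2) |>.2 (by norm_num))
      simpa using this
    refine (h1.mul_of_nonneg ih (fun _ => by positivity)
      (fun _ => by positivity)).congr fun p => ?_
    simp [Fin.prod_univ_succ, Fin.consEquiv, mul_comm]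

theorem hf_summable (d : ℕ) : Summable fun β : Fin d → ℕ => (hfw d β ^ (2 * d))⁻¹ := by
  refine Summable.of_nonneg_of_le (fun β => ?_) (fun β => ?_) (hf_summable_prod d)
  · have := hfw_one_le d β; positivity
  · rw [Finset.prod_inv_distrib]
    apply inv_anti₀ (Finset.prod_pos fun i _ => by positivity)
    calc ∏ i, ((β i : ℝ) + 1) ^ 2 ≤ ∏ _i : Fin d, hfw d β ^ 2 := by
          refine Finset.prod_le_prod (fun _ _ => by positivity) fun i _ => ?_
          have := hfw_coord d β i
          gcongr
      _ = _ := by simp [pow_mul]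

theorem hf_seminorms (d : ℕ)
    (h : (Fin d → ℕ) → SchwartzMap (EuclideanSpace ℝ (Fin d)) ℝ)
    (hh : ∀ β x, h β x = hermiteFunMulti d β x) (s : Finset (ℕ × ℕ)) :
    ∃ C : ℝ, ∃ N : ℕ, 0 ≤ C ∧ ∀ β,
      (s.sup (schwartzSeminormFamily ℝ (EuclideanSpace ℝ (Fin d)) ℝ)) (h β) ≤
        C * hfw d β ^ N := by
  have hf : ∀ β, (h β : EuclideanSpace ℝ (Fin d) → ℝ) = hermiteFunMulti d β :=
    fun β => funext (hh β)
  have hsm : ∀ β, ∀ m : ℕ, ContDiff ℝ m (hermiteFunMulti d β) := fun β m => by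
    rw [← hf]; exact (h β).smooth m
  induction s using Finset.induction_on with
  | empty =>
    refine ⟨0, 0, le_rfl, fun β => ?_⟩
    simp
  | insert p s _ ih =>
    obtain ⟨C, N, hC, h1⟩ := ih
    obtain ⟨C', N', hC', h2⟩ := hfP_all d p.1 p.2 hsm
    refine ⟨C + C', N + N', by positivity, fun β => ?_⟩
    have hw := hfw_one_le d β
    have hp1 : hfw d β ^ N ≤ hfw d β ^ (N + N') := pow_le_pow_right₀ hw (by omega)
    have hp2 : hfw d β ^ N' ≤ hfw d β ^ (N + N') := pow_le_pow_right₀ hw (by omega)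
    have hz : 0 ≤ hfw d β ^ (N + N') := by positivity
    rw [Finset.sup_insert, Seminorm.sup_apply]
    apply max_le
    · refine (SchwartzMap.seminorm_le_bound ℝ p.1 p.2 (h β) (M := C' * hfw d β ^ N')
        (by positivity) (fun x => ?_)).trans ?_
      · rw [hf]; exact h2 β x
      · nlinarith [mul_le_mul_of_nonneg_left hp2 hC', mul_nonneg hC hz]
    · refine (h1 β).trans ?_
      nlinarith [mul_le_mul_of_nonneg_left hp1 hC, mul_nonneg hC' hz]

/-- For every tempered distribution `T` there is `n` with
`Σ_β (2|β|+d)^{-2n} T(h_β)² < ∞`. -/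
theorem tempered_distribution_negative_norm_finite (d : ℕ)
    (h : (Fin d → ℕ) → SchwartzMap (EuclideanSpace ℝ (Fin d)) ℝ)
    (hh : ∀ β x, h β x = hermiteFunMulti d β x)
    (T : SchwartzMap (EuclideanSpace ℝ (Fin d)) ℝ →L[ℝ] ℝ) :
    ∃ n : ℕ, Summable (fun β : Fin d → ℕ =>
      ((((2 * ∑ i, β i) + d : ℕ) : ℝ) ^ (2 * n))⁻¹ * (T (h β)) ^ 2) := by
  have hq : Continuous ((normSeminorm ℝ ℝ).comp T.toLinearMap) := by
    exact continuous_norm.comp T.continuous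
  obtain ⟨s, C, -, hC⟩ := Seminorm.bound_of_continuous
    (schwartz_withSeminorms ℝ (EuclideanSpace ℝ (Fin d)) ℝ) _ hq
  obtain ⟨K, N, hK, hb⟩ := hf_seminorms d h hh s
  have hT : ∀ β, |T (h β)| ≤ (C * K) * hfw d β ^ N := by
    intro β
    have h1 : |T (h β)| ≤ C *
      (s.sup (schwartzSeminormFamily ℝ (EuclideanSpace ℝ (Fin d)) ℝ)) (h β) := hC (h β)
    refine h1.trans ?_
    rw [mul_assoc]
    exact mul_le_mul_of_nonneg_left (hb β) C.2
  rcases Nat.eq_zero_or_pos d with rfl | hd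
  · exact ⟨0, Summable.of_finite⟩
  refine ⟨d + N, ?_⟩
  refine Summable.of_nonneg_of_le (fun β => by positivity) (fun β => ?_)
    ((hf_summable d).mul_left ((C * K) ^ 2))
  have hw := hfw_one_le d β
  have hle : hfw d β ≤ (((2 * ∑ i, β i) + d : ℕ) : ℝ) := by
    have : (∑ i, β i) + 1 ≤ (2 * ∑ i, β i) + d := by omega
    unfold hfw
    exact_mod_cast this
  have h2 : T (h β) ^ 2 ≤ ((C * K) * hfw d β ^ N) ^ 2 := by
    rw [← sq_abs]
    have := hT β
    gcongr
  calc _ ≤ (hfw d β ^ (2 * (d + N)))⁻¹ * ((C * K) * hfw d β ^ N) ^ 2 := by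
        gcongr
    _ = _ := by
        have : hfw d β ≠ 0 := by linarith
        rw [show 2 * (d + N) = 2 * d + N * 2 by ring, pow_add, mul_pow, ← pow_mul]
        field_simp
end

section
/- Let T and S be tempered distributions in S′(ℝ^d) such that T(h_β) = S(h_β) for every multi-index β ∈ ℕ^d. Then T = S. -/
open MeasureTheory

open scoped SchwartzMap ContDiff FourierTransform Topology

section HermiteAux
variable {E : Type*} [NormedAddCommGroup E] [InnerProductSpace ℝ E]

/-- convergence of series in Schwartz space -/
theorem schwartz_tendsto_series {F : Type*} [NormedAddCommGroup F] [NormedSpace ℝ F] [CompleteSpace F]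
    (f : ℕ → 𝓢(E, F)) (g : 𝓢(E, F))
    (hs : ∀ k m, Summable fun n => SchwartzMap.seminorm ℝ k m (f n))
    (hg : ∀ x, g x = ∑' n, f n x) :
    Filter.Tendsto (fun N => ∑ n ∈ Finset.range N, f n) Filter.atTop (𝓝 g) := by
  rw [(schwartz_withSeminorms ℝ E F).tendsto_nhds]
  rintro ⟨k, m⟩ ε hε
  have hgd : ∀ x, iteratedFDeriv ℝ m g x = ∑' n, iteratedFDeriv ℝ m (f n) x := by
    intro x
    have : (g : E → F) = fun x => ∑' n, f n x := funext hg
    rw [this]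
    refine iteratedFDeriv_tsum_apply (N := ⊤) (v := fun m n => SchwartzMap.seminorm ℝ 0 m (f n))
      (fun i => (f i).smooth _) (fun k _ => hs 0 k) ?_ le_top x
    intro k i x _
    exact SchwartzMap.norm_iteratedFDeriv_le_seminorm ℝ (f i) k x
  have htail := tendsto_sum_nat_add fun n => SchwartzMap.seminorm ℝ k m (f n)
  filter_upwards [htail.eventually (gt_mem_nhds hε)] with N hN
  refine lt_of_le_of_lt ?_ hN
  rw [SchwartzMap.schwartzSeminormFamily_apply, map_sub_rev]
  refine SchwartzMap.seminorm_le_bound ℝ k m _ (tsum_nonneg fun n => apply_nonneg _ _) ?_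
  intro x
  have hsumx : Summable fun n => iteratedFDeriv ℝ m (f n) x :=
    Summable.of_norm_bounded (hs 0 m)
      fun i => SchwartzMap.norm_iteratedFDeriv_le_seminorm ℝ (f i) m x
  have hco : (⇑(g - ∑ n ∈ Finset.range N, f n) : E → F)
      = (g : E → F) - fun x => ∑ n ∈ Finset.range N, f n x := by
    ext x; simp
  have h1 : iteratedFDeriv ℝ m (⇑(g - ∑ n ∈ Finset.range N, f n)) x
      = ∑' n, iteratedFDeriv ℝ m (f (n + N)) x := by
    rw [hco, iteratedFDeriv_sub_apply (g.contDiffAt m)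
      (ContDiff.contDiffAt (ContDiff.sum fun i _ => (f i).smooth m)), hgd,
      iteratedFDeriv_fun_sum_apply (fun i _ => (f i).contDiffAt m)]
    rw [← hsumx.sum_add_tsum_nat_add N]; abel
  rw [h1]
  have hb : ∀ n, ‖x‖ ^ k * ‖iteratedFDeriv ℝ m (f (n + N)) x‖
      ≤ SchwartzMap.seminorm ℝ k m (f (n + N)) := fun n => SchwartzMap.le_seminorm ℝ k m _ x
  have hs' := (summable_nat_add_iff N).2 (hs k m)
  have hn : Summable fun n => ‖iteratedFDeriv ℝ m (f (n + N)) x‖ :=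
    Summable.of_nonneg_of_le (fun _ => norm_nonneg _)
      (fun i => SchwartzMap.norm_iteratedFDeriv_le_seminorm ℝ (f (i + N)) m x)
      ((summable_nat_add_iff N).2 (hs 0 m))
  calc _ ≤ ‖x‖ ^ k * ∑' n, ‖iteratedFDeriv ℝ m (f (n + N)) x‖ := by
        gcongr; exact norm_tsum_le_tsum_norm hn
    _ = ∑' n, ‖x‖ ^ k * ‖iteratedFDeriv ℝ m (f (n + N)) x‖ := by rw [tsum_mul_left]
    _ ≤ _ := Summable.tsum_le_tsum hb (hn.mul_left _) hs'

/-- derivatives of a composition with a linear contraction -/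
theorem norm_iteratedFDeriv_comp_contraction {G H F : Type*} [NormedAddCommGroup G] [NormedSpace ℝ G]
    [NormedAddCommGroup H] [NormedSpace ℝ H]
    [NormedAddCommGroup F] [NormedSpace ℝ F] (L : G →L[ℝ] H) (hL : ‖L‖ ≤ 1) {f : H → F}
    (hf : ContDiff ℝ ∞ f) (m : ℕ) (x : G) :
    ‖iteratedFDeriv ℝ m (f ∘ L) x‖ ≤ ‖iteratedFDeriv ℝ m f (L x)‖ := by
  rw [L.iteratedFDeriv_comp_right hf x (i := m) (mod_cast le_top)]
  refine (ContinuousMultilinearMap.norm_compContinuousLinearMap_le _ _).trans ?_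
  refine mul_le_of_le_one_right (norm_nonneg _) ?_
  exact Finset.prod_le_one (fun _ _ => norm_nonneg _) fun _ _ => hL

/-- derivative bound for a homogeneous polynomial -/
theorem norm_iteratedFDeriv_diag {n : ℕ} (M : ContinuousMultilinearMap ℝ (fun _ : Fin n => E) ℝ)
    (m : ℕ) (x : E) :
    ‖iteratedFDeriv ℝ m (fun y => M fun _ => y) x‖ ≤ n ^ m * ‖M‖ * (1 + ‖x‖) ^ n := by
  let L : E →L[ℝ] (Fin n → E) := ContinuousLinearMap.pi fun _ => ContinuousLinearMap.id ℝ E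
  have hLx : ∀ x, ‖L x‖ ≤ ‖x‖ := fun x => (pi_norm_le_iff_of_nonneg (norm_nonneg x)).2 fun i => le_rfl
  have hL : ‖L‖ ≤ 1 := L.opNorm_le_bound zero_le_one (by simpa using hLx)
  have h1 := norm_iteratedFDeriv_comp_contraction L hL M.contDiff m x
  refine h1.trans ((M.norm_iteratedFDeriv_le m (L x)).trans ?_)
  rw [Fintype.card_fin]
  gcongr ?_ * ‖M‖ * ?_
  · exact_mod_cast Nat.descFactorial_le_pow n m
  · calc ‖L x‖ ^ (n - m) ≤ (1 + ‖x‖) ^ (n - m) := by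
          gcongr; linarith [hLx x]
      _ ≤ _ := pow_le_pow_right₀ (by linarith [norm_nonneg x]) (Nat.sub_le _ _)

theorem gauss_contDiff : ContDiff ℝ ∞ (fun x : E => Real.exp (-(‖x‖ ^ 2 / 4))) :=
  Real.contDiff_exp.comp (((contDiff_norm_sq ℝ).div_const 4).neg)

theorem norm_iteratedFDeriv_gauss (m : ℕ) (x : E) :
    ‖iteratedFDeriv ℝ m (fun x : E => Real.exp (-(‖x‖ ^ 2 / 4))) x‖
      ≤ m.factorial * Real.exp (-(‖x‖ ^ 2 / 4)) * (1 + ‖x‖) ^ m := by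
  have hq : ContDiff ℝ ∞ (fun x : E => -(‖x‖ ^ 2 / 4)) := ((contDiff_norm_sq ℝ).div_const 4).neg
  refine norm_iteratedFDeriv_comp_le (g := Real.exp) (N := ∞) Real.contDiff_exp hq (mod_cast le_top) x ?_ ?_
  · intro i _
    rw [norm_iteratedFDeriv_eq_norm_iteratedDeriv, iteratedDeriv_eq_iterate, Real.iter_deriv_exp]
    simp
  · intro i hi _
    have hfd : fderiv ℝ (fun x : E => -(‖x‖ ^ 2 / 4)) = (-(1/2 : ℝ) • innerSL ℝ : E →L[ℝ] E →L[ℝ] ℝ) := by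
      ext y v
      have h := ((hasStrictFDerivAt_norm_sq y).hasFDerivAt.const_mul (-(1/4 : ℝ)))
      have e : (fun x : E => -(‖x‖ ^ 2 / 4)) = fun x => -(1/4 : ℝ) * ‖x‖ ^ 2 := by ext; ring
      rw [e, h.fderiv]
      simp
      ring
    have hn : ‖(-(1/2 : ℝ) • innerSL ℝ : E →L[ℝ] E →L[ℝ] ℝ)‖ ≤ 1 := by
      refine ContinuousLinearMap.opNorm_le_bound _ zero_le_one fun y => ?_
      rw [smul_apply, norm_smul, innerSL_apply_norm]
      norm_num
      linarith [norm_nonneg y]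
    obtain ⟨j, rfl⟩ : ∃ j, i = j + 1 := ⟨i - 1, by omega⟩
    rw [← norm_iteratedFDeriv_fderiv, hfd]
    have hx := norm_nonneg x
    rcases j with _ | _ | j
    · rw [norm_iteratedFDeriv_zero]
      refine (ContinuousLinearMap.le_of_opNorm_le _ hn x).trans ?_
      simp
    · rw [← norm_iteratedFDeriv_fderiv, norm_iteratedFDeriv_zero, ContinuousLinearMap.fderiv]
      exact hn.trans (one_le_pow₀ (by linarith))
    · rw [← norm_iteratedFDeriv_fderiv]
      have : fderiv ℝ (⇑(-(1/2 : ℝ) • innerSL ℝ : E →L[ℝ] E →L[ℝ] ℝ)) = fun _ => (-(1/2 : ℝ) • innerSL ℝ : E →L[ℝ] E →L[ℝ] ℝ) := by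
        ext1 y; rw [ContinuousLinearMap.fderiv]
      rw [this, iteratedFDeriv_const_of_ne (by omega)]
      simp; positivity

theorem gauss_num_bound (a : ℝ) (N : ℕ) (t : ℝ) (ht : 0 ≤ t) :
    (1 + t) ^ N * Real.exp (a * (1 + t)) * Real.exp (-(t ^ 2 / 4))
      ≤ N.factorial * Real.exp ((a + 1) + (a + 1) ^ 2) := by
  have h1 : (1 + t) ^ N ≤ N.factorial * Real.exp (1 + t) := by
    have := Real.pow_div_factorial_le_exp (1 + t) (by linarith) N
    rw [div_le_iff₀ (by positivity)] at this
    linarith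
  calc _ ≤ (N.factorial * Real.exp (1 + t)) * Real.exp (a * (1 + t)) * Real.exp (-(t ^ 2 / 4)) := by
        gcongr
    _ = N.factorial * Real.exp ((1 + t) + a * (1 + t) + (-(t ^ 2 / 4))) := by
        rw [Real.exp_add (1 + t + a * (1 + t)), Real.exp_add (1 + t)]; ring
    _ ≤ _ := by
        refine mul_le_mul_of_nonneg_left (Real.exp_le_exp.2 ?_) (by positivity)
        nlinarith [sq_nonneg (t / 2 - (a + 1))]

/-- The Gaussian `exp(-|x|^2/4)` as a Schwartz function. -/
noncomputable def gaussSchwartz (E : Type*) [NormedAddCommGroup E] [InnerProductSpace ℝ E] :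
    𝓢(E, ℝ) where
  toFun x := Real.exp (-(‖x‖ ^ 2 / 4))
  smooth' := gauss_contDiff
  decay' k m := by
    refine ⟨m.factorial * ((k + m).factorial * Real.exp ((0 + 1) + (0 + 1) ^ 2)), fun x => ?_⟩
    have hx := norm_nonneg x
    calc _ ≤ (1 + ‖x‖) ^ k * (m.factorial * Real.exp (-(‖x‖ ^ 2 / 4)) * (1 + ‖x‖) ^ m) := by
          gcongr
          · linarith
          · exact norm_iteratedFDeriv_gauss m x
      _ = m.factorial * ((1 + ‖x‖) ^ (k + m) * Real.exp (0 * (1 + ‖x‖)) * Real.exp (-(‖x‖ ^ 2 / 4))) := by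
          rw [pow_add]; simp; ring
      _ ≤ _ := mul_le_mul_of_nonneg_left (gauss_num_bound 0 (k + m) ‖x‖ hx) (by positivity)

theorem gaussSchwartz_apply (x : E) : gaussSchwartz E x = Real.exp (-(‖x‖ ^ 2 / 4)) := rfl

theorem diag_hasTemperateGrowth {n : ℕ} (M : ContinuousMultilinearMap ℝ (fun _ : Fin n => E) ℝ) :
    (fun y => M fun _ => y).HasTemperateGrowth :=
  ⟨M.contDiff.comp (contDiff_pi.2 fun _ => contDiff_id),
    fun m => ⟨n, n ^ m * ‖M‖, fun x => norm_iteratedFDeriv_diag M m x⟩⟩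

theorem seminorm_gauss_diag (C R : ℝ) (hC : 0 ≤ C) (hR : 0 ≤ R) (k m : ℕ) : ∃ K : ℝ, ∀ (n : ℕ)
    (M : ContinuousMultilinearMap ℝ (fun _ : Fin n => E) ℝ), ‖M‖ ≤ C * R ^ n / n.factorial →
    SchwartzMap.seminorm ℝ k m
      (SchwartzMap.smulLeftCLM ℝ (fun y => M fun _ => y) (gaussSchwartz E)) ≤ K * (1 / 2) ^ n := by
  set a := 2 * Real.exp 1 * R with ha
  refine ⟨2 ^ m * m.factorial ^ 2 * Real.exp 1 * C *
    ((k + m).factorial * Real.exp ((a + 1) + (a + 1) ^ 2)), fun n M hM => ?_⟩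
  refine SchwartzMap.seminorm_le_bound ℝ k m _ (by positivity) fun x => ?_
  have hx := norm_nonneg x
  have hX : 1 ≤ 1 + ‖x‖ := by linarith
  set X := 1 + ‖x‖ with hXdef
  have hco : (⇑(SchwartzMap.smulLeftCLM ℝ (fun y => M fun _ => y) (gaussSchwartz E)) : E → ℝ)
      = fun y => (M fun _ => y) * Real.exp (-(‖y‖ ^ 2 / 4)) := by
    ext y
    rw [SchwartzMap.smulLeftCLM_apply_apply (diag_hasTemperateGrowth M), gaussSchwartz_apply, smul_eq_mul]
  rw [hco]
  have hnum : ((n : ℝ) + 1) ^ m ≤ m.factorial * Real.exp (n + 1) := by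
    have := Real.pow_div_factorial_le_exp ((n : ℝ) + 1) (by positivity) m
    rw [div_le_iff₀ (by positivity)] at this
    linarith
  have hser : (a * X) ^ n / n.factorial ≤ Real.exp (a * X) :=
    Real.pow_div_factorial_le_exp _ (by positivity) n
  have hD : ‖iteratedFDeriv ℝ m (fun y => (M fun _ => y) * Real.exp (-(‖y‖ ^ 2 / 4))) x‖
      ≤ 2 ^ m * ((((n : ℝ) + 1) ^ m * ‖M‖ * X ^ n) *
        (m.factorial * Real.exp (-(‖x‖ ^ 2 / 4)) * X ^ m)) := by
    refine (norm_iteratedFDeriv_mul_le (N := ∞) (diag_hasTemperateGrowth M).1 gauss_contDiff x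
      (mod_cast le_top)).trans ?_
    have h2 : (2 : ℝ) ^ m = ∑ i ∈ Finset.range (m + 1), (m.choose i : ℝ) := by
      exact_mod_cast (Nat.sum_range_choose m).symm
    rw [h2, Finset.sum_mul]
    refine Finset.sum_le_sum fun i hi => ?_
    have him : i ≤ m := by simpa [Nat.lt_succ_iff] using hi
    rw [mul_assoc]
    gcongr
    · refine (norm_iteratedFDeriv_diag M i x).trans ?_
      gcongr
      calc (n : ℝ) ^ i ≤ ((n : ℝ) + 1) ^ i := by gcongr; linarith
        _ ≤ _ := pow_le_pow_right₀ (by linarith [n.cast_nonneg (α := ℝ)]) him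
    · refine (norm_iteratedFDeriv_gauss (m - i) x).trans ?_
      gcongr
      · exact Nat.sub_le _ _
      · exact Nat.sub_le _ _
  calc _ ≤ X ^ k * (2 ^ m * (((m.factorial * Real.exp (n + 1)) * (C * R ^ n / n.factorial) * X ^ n) *
        (m.factorial * Real.exp (-(‖x‖ ^ 2 / 4)) * X ^ m))) := by
        refine mul_le_mul (by gcongr; linarith) (hD.trans ?_) (norm_nonneg _) (by positivity)
        gcongr
    _ = 2 ^ m * m.factorial ^ 2 * Real.exp 1 * C *
        (X ^ (k + m) * ((a * X) ^ n / n.factorial) * Real.exp (-(‖x‖ ^ 2 / 4))) * (1 / 2) ^ n := by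
        rw [Real.exp_add, ha, pow_add]
        have : Real.exp n = Real.exp 1 ^ n := by rw [← Real.exp_nat_mul]; simp
        rw [this]
        simp only [mul_pow, div_pow, one_pow]
        field_simp
    _ ≤ 2 ^ m * m.factorial ^ 2 * Real.exp 1 * C *
        (X ^ (k + m) * Real.exp (a * X) * Real.exp (-(‖x‖ ^ 2 / 4))) * (1 / 2) ^ n := by
        gcongr
    _ ≤ _ := by
        refine mul_le_mul_of_nonneg_right (mul_le_mul_of_nonneg_left
          (gauss_num_bound a (k + m) ‖x‖ hx) (by positivity)) (by positivity)

/-- Taylor expansion for functions of exponential type. -/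
theorem taylor_exp_type (F : E → ℝ) (hF : ContDiff ℝ ∞ F) (C R : ℝ) 
    (hb : ∀ n x, ‖iteratedFDeriv ℝ n F x‖ ≤ C * R ^ n) (x : E) :
    F x = ∑' n : ℕ, ((n.factorial : ℝ)⁻¹ • iteratedFDeriv ℝ n F 0) fun _ => x := by
  have hexp : Summable fun n : ℕ => C * ((R * ‖x‖) ^ n / n.factorial) :=
    (Real.summable_pow_div_factorial _).mul_left C
  have hle : ∀ n y, ‖iteratedFDeriv ℝ n F y fun _ => x‖ ≤ C * (R * ‖x‖) ^ n := by
    intro n y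
    refine (ContinuousMultilinearMap.le_opNorm _ _).trans ?_
    rw [Finset.prod_const, Finset.card_fin, mul_pow, ← mul_assoc]
    gcongr
    exact hb n y
  have hsum : Summable fun n : ℕ => ((n.factorial : ℝ)⁻¹ • iteratedFDeriv ℝ n F 0) fun _ => x := by
    refine Summable.of_norm_bounded hexp fun n => ?_
    rw [smul_apply, norm_smul, norm_inv, RCLike.norm_natCast]
    calc _ ≤ (n.factorial : ℝ)⁻¹ * (C * (R * ‖x‖) ^ n) := by gcongr; exact hle n 0
      _ = _ := by ring
  refine tendsto_nhds_unique ?_ (hsum.hasSum.tendsto_sum_nat.comp (Filter.tendsto_add_atTop_nat 1))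
  let L : ℝ →L[ℝ] E := ContinuousLinearMap.toSpanSingleton ℝ x
  have hder : ∀ n t, iteratedDeriv n (F ∘ L) t = iteratedFDeriv ℝ n F (t • x) fun _ => x := by
    intro n t
    rw [iteratedDeriv_eq_iteratedFDeriv, L.iteratedFDeriv_comp_right hF t (i := n) (mod_cast le_top)]
    simp [L]
  have hγ : ContDiff ℝ ∞ (F ∘ L) := hF.comp L.contDiff
  have hderW : ∀ n, ∀ t ∈ Set.Icc (0:ℝ) 1, iteratedDerivWithin n (F ∘ L) (Set.Icc 0 1) t
      = iteratedFDeriv ℝ n F (t • x) fun _ => x := by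
    intro n t ht
    rw [← hder]
    exact iteratedDerivWithin_eq_iteratedDeriv (uniqueDiffOn_Icc zero_lt_one)
      (hγ.contDiffAt.of_le (mod_cast le_top)) ht
  have hrem : ∀ N : ℕ, ‖F x - ∑ n ∈ Finset.range (N + 1),
      ((n.factorial : ℝ)⁻¹ • iteratedFDeriv ℝ n F 0) fun _ => x‖
        ≤ (C * (R * ‖x‖)) * ((R * ‖x‖) ^ N / N.factorial) := by
    intro N
    have := taylor_mean_remainder_bound (f := F ∘ L) (a := 0) (b := 1) (x := 1) (n := N)
      (C := C * (R * ‖x‖) ^ (N + 1)) zero_le_one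
      (hγ.contDiffOn.of_le (mod_cast le_top)) (by simp) (fun y hy => by
        rw [hderW _ y hy]; exact hle _ _)
    rw [taylor_within_apply] at this
    have e : ∑ n ∈ Finset.range (N + 1), (((n.factorial : ℝ)⁻¹ * (1 - 0) ^ n) •
        iteratedDerivWithin n (F ∘ L) (Set.Icc 0 1) 0) = ∑ n ∈ Finset.range (N + 1),
      ((n.factorial : ℝ)⁻¹ • iteratedFDeriv ℝ n F 0) fun _ => x := by
      refine Finset.sum_congr rfl fun n _ => ?_
      rw [hderW n 0 (by simp)]
      simp
    rw [e] at this
    simp only [Function.comp_apply, L, ContinuousLinearMap.toSpanSingleton_apply, one_smul] at this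
    refine this.trans (le_of_eq ?_)
    simp; ring
  have h0 : Filter.Tendsto (fun N : ℕ => (C * (R * ‖x‖)) * ((R * ‖x‖) ^ N / N.factorial))
      Filter.atTop (𝓝 0) := by
    simpa using ((Real.summable_pow_div_factorial (R * ‖x‖)).tendsto_atTop_zero).const_mul (C * (R * ‖x‖))
  have := squeeze_zero_norm hrem h0
  have h2 := (tendsto_const_nhds (x := F x)).sub this
  simpa [Function.comp_def] using h2

theorem pairing_gauss_exp_type (U : 𝓢(E, ℝ) →L[ℝ] ℝ)
    (hU : ∀ (n : ℕ) (M : ContinuousMultilinearMap ℝ (fun _ : Fin n => E) ℝ),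
      U (SchwartzMap.smulLeftCLM ℝ (fun y => M fun _ => y) (gaussSchwartz E)) = 0)
    (F : 𝓢(E, ℝ)) (C R : ℝ) (hC : 0 ≤ C) (hR : 0 ≤ R)
    (hb : ∀ n x, ‖iteratedFDeriv ℝ n F x‖ ≤ C * R ^ n) :
    U (SchwartzMap.smulLeftCLM ℝ (gaussSchwartz E) F) = 0 := by
  let M : ∀ n : ℕ, ContinuousMultilinearMap ℝ (fun _ : Fin n => E) ℝ :=
    fun n => (n.factorial : ℝ)⁻¹ • iteratedFDeriv ℝ n F 0
  have hM : ∀ n, ‖M n‖ ≤ C * R ^ n / n.factorial := by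
    intro n
    rw [norm_smul, norm_inv, RCLike.norm_natCast, div_eq_inv_mul]
    gcongr
    exact hb n 0
  have ht := schwartz_tendsto_series
    (fun n => SchwartzMap.smulLeftCLM ℝ (fun y => M n fun _ => y) (gaussSchwartz E))
    (SchwartzMap.smulLeftCLM ℝ (gaussSchwartz E) F) (fun k m => by
      obtain ⟨K, hK⟩ := seminorm_gauss_diag (E := E) C R hC hR k m
      exact Summable.of_nonneg_of_le (fun _ => apply_nonneg _ _) (fun n => hK n (M n) (hM n))
        ((summable_geometric_of_lt_one (by norm_num) (by norm_num)).mul_left K)) (fun x => by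
      rw [SchwartzMap.smulLeftCLM_apply_apply (gaussSchwartz E).hasTemperateGrowth]
      rw [taylor_exp_type F (F.smooth ⊤) C R hb x, smul_eq_mul, ← tsum_mul_left]
      refine tsum_congr fun n => ?_
      rw [SchwartzMap.smulLeftCLM_apply_apply (diag_hasTemperateGrowth (M n)), smul_eq_mul, mul_comm])
  refine tendsto_nhds_unique ((U.continuous.tendsto _).comp ht) ?_
  have : (U ∘ fun N => ∑ n ∈ Finset.range N,
      SchwartzMap.smulLeftCLM ℝ (fun y => M n fun _ => y) (gaussSchwartz E)) = fun _ => 0 := by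
    ext N
    rw [Function.comp_apply, map_sum]
    exact Finset.sum_eq_zero fun n _ => hU n (M n)
  rw [this]
  exact tendsto_const_nhds

/-- density of compactly supported functions in Schwartz space -/
theorem schwartz_approx [FiniteDimensional ℝ E] {F : Type*} [NormedAddCommGroup F] [NormedSpace ℝ F]
    (f : 𝓢(E, F)) : ∃ φ : ℕ → 𝓢(E, F), (∀ j, HasCompactSupport (φ j)) ∧
      Filter.Tendsto φ Filter.atTop (𝓝 f) := by
  let χ : ContDiffBump (0 : E) := ⟨1, 2, zero_lt_one, one_lt_two⟩
  have hχ : ContDiff ℝ ∞ χ := χ.contDiff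
  let χS : 𝓢(E, ℝ) := χ.hasCompactSupport.toSchwartzMap hχ
  let w : E → ℝ := fun x => 1 - χ x
  have hw : ContDiff ℝ ∞ w := contDiff_const.sub hχ
  let B : ℕ → ℝ := fun i => 1 + SchwartzMap.seminorm ℝ 0 i χS
  have hB0 : ∀ i, 0 ≤ B i := fun i => add_nonneg zero_le_one (apply_nonneg _ _)
  have hB : ∀ i y, ‖iteratedFDeriv ℝ i w y‖ ≤ B i := by
    intro i y
    have e : w = (fun _ => (1 : ℝ)) - ⇑χ := rfl
    rw [e, iteratedFDeriv_sub_apply contDiffAt_const (hχ.contDiffAt.of_le (mod_cast le_top))]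
    refine (norm_sub_le _ _).trans (add_le_add ?_ ?_)
    · rcases i with _ | i
      · simp
      · rw [iteratedFDeriv_const_of_ne (by omega)]; simp
    · exact SchwartzMap.norm_iteratedFDeriv_le_seminorm ℝ χS i y
  have hB' : ∀ i y, ‖iteratedFDeriv ℝ i w y‖ ≤ B i * ‖y‖ := by
    intro i y
    by_cases hy : ‖y‖ < 1
    · have h0 : w =ᶠ[𝓝 y] fun _ => 0 := by
        have : Metric.ball (0 : E) 1 ∈ 𝓝 y := Metric.isOpen_ball.mem_nhds (by simpa using hy)
        filter_upwards [this] with z hz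
        have : χ z = 1 := χ.one_of_mem_closedBall (Metric.ball_subset_closedBall hz)
        simp [w, this]
      rw [(h0.iteratedFDeriv ℝ i).eq_of_nhds]
      simp only [iteratedFDeriv_fun_zero, Pi.zero_apply, norm_zero]
      exact mul_nonneg (hB0 i) (norm_nonneg _)
    · exact (hB i y).trans (le_mul_of_one_le_right (hB0 i) (not_lt.1 hy))
  let c : ℕ → ℝ := fun j => 1 / ((j : ℝ) + 1)
  have hc0 : ∀ j, 0 < c j := fun j => by positivity
  have hc1 : ∀ j, c j ≤ 1 := fun j => by
    rw [div_le_one (by positivity)]; linarith [j.cast_nonneg (α := ℝ)]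
  let L : ℕ → E →L[ℝ] E := fun j => c j • ContinuousLinearMap.id ℝ E
  have hLx : ∀ j x, ‖L j x‖ = c j * ‖x‖ := fun j x => by
    simp [L, norm_smul, abs_of_pos (hc0 j)]
  have hL : ∀ j, ‖L j‖ ≤ 1 := fun j => (L j).opNorm_le_bound zero_le_one fun x => by
    rw [hLx]; gcongr; exact hc1 j
  have hcs : ∀ j, HasCompactSupport (χ ∘ L j) := by
    intro j
    refine HasCompactSupport.intro (isCompact_closedBall (0 : E) (2 / c j)) fun x hx => ?_
    refine χ.zero_of_le_dist ?_
    simp only [Metric.mem_closedBall, dist_zero_right, not_le] at hx ⊢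
    rw [hLx]
    rw [div_lt_iff₀ (hc0 j)] at hx
    change 2 ≤ _
    linarith
  have htg : ∀ j, (χ ∘ L j).HasTemperateGrowth := fun j =>
    (hcs j).hasTemperateGrowth (hχ.comp (L j).contDiff)
  refine ⟨fun j => SchwartzMap.smulLeftCLM F (χ ∘ L j) f, fun j => ?_, ?_⟩
  · rw [SchwartzMap.smulLeftCLM_apply (htg j)]
    exact (hcs j).smul_right
  rw [(schwartz_withSeminorms ℝ E F).tendsto_nhds]
  rintro ⟨k, m⟩ ε hε
  let K : ℝ := ∑ i ∈ Finset.range (m + 1), (m.choose i : ℝ) * B i * SchwartzMap.seminorm ℝ (k + 1) (m - i) f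
  have hK0 : 0 ≤ K := Finset.sum_nonneg fun i _ =>
    mul_nonneg (mul_nonneg (by positivity) (hB0 i)) (apply_nonneg _ _)
  have hbound : ∀ j, SchwartzMap.seminorm ℝ k m (SchwartzMap.smulLeftCLM F (χ ∘ L j) f - f) ≤ c j * K := by
    intro j
    rw [map_sub_rev]
    refine SchwartzMap.seminorm_le_bound ℝ k m _ (mul_nonneg (hc0 j).le hK0) fun x => ?_
    have e : (⇑(f - SchwartzMap.smulLeftCLM F (χ ∘ L j) f) : E → F) = fun y => (w ∘ L j) y • f y := by
      ext y
      simp [SchwartzMap.smulLeftCLM_apply_apply (htg j), w, sub_smul]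
    rw [e]
    have h1 := norm_iteratedFDeriv_smul_le (𝕜 := ℝ) (N := ∞) (hw.comp (L j).contDiff) (f.smooth ⊤) x
      (n := m) (mod_cast le_top)
    calc _ ≤ ‖x‖ ^ k * _ := mul_le_mul_of_nonneg_left h1 (by positivity)
      _ ≤ c j * K := by
        rw [Finset.mul_sum, Finset.mul_sum]
        refine Finset.sum_le_sum fun i _ => ?_
        have h2 := (norm_iteratedFDeriv_comp_contraction (L j) (hL j) hw i x).trans (hB' i (L j x))
        rw [hLx] at h2
        have h3 := SchwartzMap.le_seminorm ℝ (k + 1) (m - i) f x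
        have := hB0 i
        have := (hc0 j).le
        calc _ ≤ ‖x‖ ^ k * ((m.choose i : ℝ) * (B i * (c j * ‖x‖)) * ‖iteratedFDeriv ℝ (m - i) f x‖) := by
              gcongr
          _ = c j * ((m.choose i : ℝ) * B i * (‖x‖ ^ (k + 1) * ‖iteratedFDeriv ℝ (m - i) f x‖)) := by ring
          _ ≤ _ := by gcongr
  have hlim : Filter.Tendsto (fun j => c j * K) Filter.atTop (𝓝 0) := by
    have := (tendsto_one_div_add_atTop_nhds_zero_nat (𝕜 := ℝ)).mul_const K
    rwa [zero_mul] at this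
  filter_upwards [hlim.eventually (gt_mem_nhds hε)] with j hj
  exact (hbound j).trans_lt hj

theorem fourier_exp_type [FiniteDimensional ℝ E] [MeasurableSpace E] [BorelSpace E]
    (φ : 𝓢(E, ℂ)) (hφ : HasCompactSupport φ) :
    ∃ C R : ℝ, 0 ≤ C ∧ 0 ≤ R ∧ ∀ n x,
      ‖iteratedFDeriv ℝ n (SchwartzMap.postcompCLM Complex.reCLM (𝓕 φ)) x‖ ≤ C * R ^ n := by
  obtain ⟨r, hr1, hr⟩ : ∃ r : ℝ, 1 ≤ r ∧ ∀ v, r < ‖v‖ → φ v = 0 := by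
    obtain ⟨r, hr⟩ := hφ.isCompact.isBounded.subset_closedBall (0 : E)
    refine ⟨max r 1, le_max_right _ _, fun v hv => ?_⟩
    by_contra h
    have := hr (subset_tsupport _ h)
    simp only [Metric.mem_closedBall, dist_zero_right] at this
    exact absurd (lt_of_le_of_lt (le_max_left r 1) hv) (not_lt.2 this)
  refine ⟨∫ v, ‖φ v‖, 2 * Real.pi * (2 * r), by positivity, by positivity, fun n x => ?_⟩
  have h1 : ‖iteratedFDeriv ℝ n (SchwartzMap.postcompCLM Complex.reCLM (𝓕 φ)) x‖
      ≤ ‖iteratedFDeriv ℝ n (𝓕 φ : 𝓢(E, ℂ)) x‖ := by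
    have e : (⇑(SchwartzMap.postcompCLM Complex.reCLM (𝓕 φ)) : E → ℝ) = Complex.reCLM ∘ ⇑(𝓕 φ : 𝓢(E, ℂ)) := by
      ext y; simp
    rw [e]
    have := Complex.reCLM.norm_iteratedFDeriv_comp_left (x := x) ((𝓕 φ : 𝓢(E, ℂ)).contDiffAt ⊤) (n := n) (mod_cast le_top)
    simpa using this
  refine h1.trans ?_
  have h2 := Real.pow_mul_norm_iteratedFDeriv_fourier_le (K := ⊤) (N := ⊤) (φ.smooth ⊤)
    (fun k n _ _ => φ.integrable_pow_mul_iteratedFDeriv volume k n) (k := n) (n := 0) le_top le_top x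
  rw [pow_zero, one_mul, pow_zero, mul_one, ← SchwartzMap.fourier_coe] at h2
  refine h2.trans ?_
  have h3 : ∀ p ∈ Finset.range (n + 1) ×ˢ Finset.range (0 + 1),
      ∫ v, ‖v‖ ^ p.1 * ‖iteratedFDeriv ℝ p.2 φ v‖ ≤ r ^ n * ∫ v, ‖φ v‖ := by
    rintro ⟨p, q⟩ hp
    simp only [zero_add, Finset.mem_product, Finset.mem_range, Nat.lt_one_iff, Order.lt_add_one_iff] at hp
    obtain ⟨hp, rfl⟩ := hp
    rw [← integral_const_mul]
    refine integral_mono (φ.integrable_pow_mul_iteratedFDeriv volume p 0) (φ.integrable.norm.const_mul _) fun v => ?_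
    simp only [norm_iteratedFDeriv_zero]
    by_cases hv : r < ‖v‖
    · simp [hr v hv]
    · gcongr
      exact (pow_le_pow_left₀ (norm_nonneg _) (not_lt.1 hv) p).trans (pow_le_pow_right₀ hr1 hp)
  have h4 := Finset.sum_le_card_nsmul _ _ _ h3
  have h5 : ((n : ℝ) + 1) ≤ 2 ^ n := by exact_mod_cast Nat.lt_two_pow_self (n := n)
  have hI : 0 ≤ ∫ v, ‖φ v‖ := by positivity
  calc _ ≤ (2 * Real.pi) ^ n * (((n : ℝ) + 1) * (r ^ n * ∫ v, ‖φ v‖)) := by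
        gcongr
        simpa using h4
    _ ≤ (2 * Real.pi) ^ n * (2 ^ n * (r ^ n * ∫ v, ‖φ v‖)) := by gcongr
    _ = _ := by simp only [mul_pow]; ring

theorem eq_zero_of_gauss_diag [FiniteDimensional ℝ E] [MeasurableSpace E] [BorelSpace E]
    (U : 𝓢(E, ℝ) →L[ℝ] ℝ)
    (hU : ∀ (n : ℕ) (M : ContinuousMultilinearMap ℝ (fun _ : Fin n => E) ℝ),
      U (SchwartzMap.smulLeftCLM ℝ (fun y => M fun _ => y) (gaussSchwartz E)) = 0) : U = 0 := by
  have h1 : ∀ ψ : 𝓢(E, ℝ), U (SchwartzMap.smulLeftCLM ℝ (gaussSchwartz E) ψ) = 0 := by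
    intro ψ
    let ψc : 𝓢(E, ℂ) := SchwartzMap.postcompCLM Complex.ofRealCLM ψ
    obtain ⟨φ, hφc, hφ⟩ := schwartz_approx (𝓕⁻ ψc)
    have hz : ∀ j, U (SchwartzMap.smulLeftCLM ℝ (gaussSchwartz E)
        (SchwartzMap.postcompCLM Complex.reCLM (𝓕 (φ j)))) = 0 := by
      intro j
      obtain ⟨C, R, hC, hR, hb⟩ := fourier_exp_type (φ j) (hφc j)
      exact pairing_gauss_exp_type U hU _ C R hC hR hb
    have hcont : Continuous fun f : 𝓢(E, ℂ) => U (SchwartzMap.smulLeftCLM ℝ (gaussSchwartz E)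
        (SchwartzMap.postcompCLM Complex.reCLM (𝓕 f))) := by
      refine U.continuous.comp ((SchwartzMap.smulLeftCLM ℝ (gaussSchwartz E)).continuous.comp
        ((SchwartzMap.postcompCLM Complex.reCLM).continuous.comp ?_))
      exact FourierTransform.continuous_fourier
    have ht := (hcont.tendsto _).comp hφ
    have e : SchwartzMap.postcompCLM Complex.reCLM (𝓕 (𝓕⁻ ψc)) = ψ := by
      rw [FourierTransform.fourier_fourierInv_eq]
      ext x
      simp [ψc]
    rw [e] at ht
    refine tendsto_nhds_unique ht ?_
    have : ((fun f : 𝓢(E, ℂ) => U (SchwartzMap.smulLeftCLM ℝ (gaussSchwartz E)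
        (SchwartzMap.postcompCLM Complex.reCLM (𝓕 f)))) ∘ φ) = fun _ => 0 := funext hz
    rw [this]
    exact tendsto_const_nhds
  ext f
  obtain ⟨φ, hφc, hφ⟩ := schwartz_approx f
  have hz : ∀ j, U (φ j) = 0 := by
    intro j
    have hcs : HasCompactSupport (fun x => Real.exp (‖x‖ ^ 2 / 4) * φ j x) := (hφc j).mul_left
    have hsm : ContDiff ℝ ∞ (fun x => Real.exp (‖x‖ ^ 2 / 4) * φ j x) :=
      (Real.contDiff_exp.comp ((contDiff_norm_sq ℝ).div_const 4)).mul ((φ j).smooth ⊤)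
    have := h1 (hcs.toSchwartzMap hsm)
    convert this using 2
    ext x
    rw [SchwartzMap.smulLeftCLM_apply_apply (gaussSchwartz E).hasTemperateGrowth]
    simp [gaussSchwartz_apply, ← mul_assoc, ← Real.exp_add]
  refine tendsto_nhds_unique ((U.continuous.tendsto _).comp hφ) ?_
  have : U ∘ φ = fun _ => 0 := funext hz
  rw [this]
  exact tendsto_const_nhds

end HermiteAux

section HermiteFinal
variable {d : ℕ}

theorem mvpoly_hasTemperateGrowth (q : MvPolynomial (Fin d) ℝ) :
    (fun x : EuclideanSpace ℝ (Fin d) => MvPolynomial.eval (fun i => x i) q).HasTemperateGrowth := by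
  induction q using MvPolynomial.induction_on with
  | C a => simp
  | add p q hp hq => simp only [map_add]; exact hp.add hq
  | mul_X p i hp =>
    have hX : (fun x : EuclideanSpace ℝ (Fin d) => x i).HasTemperateGrowth :=
      (EuclideanSpace.proj (𝕜 := ℝ) i : EuclideanSpace ℝ (Fin d) →L[ℝ] ℝ).hasTemperateGrowth
    simp only [map_mul, MvPolynomial.eval_X]; exact hp.mul hX

/-- the functional on polynomials -/
noncomputable def polyFunctional (U : 𝓢(EuclideanSpace ℝ (Fin d), ℝ) →L[ℝ] ℝ) :
    MvPolynomial (Fin d) ℝ →ₗ[ℝ] ℝ where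
  toFun q := U (SchwartzMap.smulLeftCLM ℝ (fun x => MvPolynomial.eval (fun i => x i) q)
    (gaussSchwartz (EuclideanSpace ℝ (Fin d))))
  map_add' p q := by
    rw [← map_add]
    congr 1
    ext x
    simp [SchwartzMap.smulLeftCLM_apply_apply, mvpoly_hasTemperateGrowth,
      SchwartzMap.smulLeftCLM_apply_apply (mvpoly_hasTemperateGrowth (p + q)), -map_add]
    simp [add_mul]
  map_smul' c p := by
    rw [RingHom.id_apply, ← map_smul]
    congr 1
    ext x
    simp [SchwartzMap.smulLeftCLM_apply_apply (mvpoly_hasTemperateGrowth (c • p)),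
      SchwartzMap.smulLeftCLM_apply_apply (mvpoly_hasTemperateGrowth p), -MvPolynomial.smul_eval]
    simp [mul_assoc]

/-- the real Hermite polynomials as a polynomial sequence -/
noncomputable def hermiteSeq : Polynomial.Sequence ℝ where
  elems' n := (Polynomial.hermite n).map (Int.castRingHom ℝ)
  degree_eq' n := by
    rw [(Polynomial.hermite_monic n).degree_map, Polynomial.degree_hermite]

theorem hermiteSeq_apply (n : ℕ) :
    hermiteSeq n = (Polynomial.hermite n).map (Int.castRingHom ℝ) := rfl

theorem hermiteFun_eq (n : ℕ) (x : ℝ) : hermiteFun n x =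
    (Real.sqrt (Real.sqrt (2 * Real.pi) * n.factorial))⁻¹ *
      (Real.exp (-(x ^ 2 / 4)) * (hermiteSeq n).eval x) := by
  have : hermitePoly n x = (hermiteSeq n).eval x := by
    rw [hermiteSeq_apply, hermitePoly, iteratedDeriv_eq_iterate, Polynomial.eval_map,
      ← algebraMap_int_eq, ← Polynomial.aeval_def, Polynomial.hermite_eq_deriv_gaussian']
    ring
  rw [hermiteFun, this, mul_assoc]

theorem polyFunctional_eq_zero (U : 𝓢(EuclideanSpace ℝ (Fin d), ℝ) →L[ℝ] ℝ)
    (hU : ∀ β : Fin d → ℕ,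
      polyFunctional U (∏ i, Polynomial.aeval (MvPolynomial.X i) (hermiteSeq (β i))) = 0) :
    polyFunctional U = 0 := by
  let B : MultilinearMap ℝ (fun _ : Fin d => Polynomial ℝ) ℝ :=
    (polyFunctional U).compMultilinearMap
      ((MultilinearMap.mkPiAlgebra ℝ (Fin d) (MvPolynomial (Fin d) ℝ)).compLinearMap
        fun i => (Polynomial.aeval (R := ℝ) (MvPolynomial.X i : MvPolynomial (Fin d) ℝ)).toLinearMap)
  have hB : B = 0 := by
    refine Module.Basis.ext_multilinear
      (fun _ => hermiteSeq.basis fun i => ?_) fun v => ?_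
    · rw [hermiteSeq_apply, ((Polynomial.hermite_monic i).map _).leadingCoeff]
      exact isUnit_one
    · simpa [B] using hU v
  refine MvPolynomial.linearMap_ext fun s => LinearMap.ext_ring ?_
  have := congrArg (fun b => b fun i => (Polynomial.X : Polynomial ℝ) ^ s i) hB
  simp only [B, LinearMap.compMultilinearMap_apply, MultilinearMap.compLinearMap_apply,
    MultilinearMap.mkPiAlgebra_apply, AlgHom.toLinearMap_apply, map_pow, Polynomial.aeval_X] at this
  simp only [LinearMap.comp_apply]
  rw [MvPolynomial.monomial_eq, Finsupp.prod_fintype _ _ (by simp)]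
  simpa using this

end HermiteFinal

/-- Two tempered distributions with the same Hermite coefficients are equal. -/
theorem tempered_distribution_ext_of_hermite_coeffs (d : ℕ)
    (h : (Fin d → ℕ) → SchwartzMap (EuclideanSpace ℝ (Fin d)) ℝ)
    (hh : ∀ β x, h β x = hermiteFunMulti d β x)
    (T S : SchwartzMap (EuclideanSpace ℝ (Fin d)) ℝ →L[ℝ] ℝ)
    (hTS : ∀ β : Fin d → ℕ, T (h β) = S (h β)) :
    T = S := by
  rw [← sub_eq_zero]
  have hU : ∀ β, (T - S) (h β) = 0 := fun β => by simp [hTS β]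
  generalize T - S = U at hU
  have hpoly : polyFunctional U = 0 := by
    refine polyFunctional_eq_zero U fun β => ?_
    let c : ℝ := ∏ i, (Real.sqrt (Real.sqrt (2 * Real.pi) * (β i).factorial))⁻¹
    have hc : c ≠ 0 := Finset.prod_ne_zero_iff.2 fun i _ => by positivity
    let q : MvPolynomial (Fin d) ℝ := ∏ i, Polynomial.aeval (MvPolynomial.X i) (hermiteSeq (β i))
    have e : h β = c • SchwartzMap.smulLeftCLM ℝ (fun x => MvPolynomial.eval (fun i => x i) q)
        (gaussSchwartz (EuclideanSpace ℝ (Fin d))) := by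
      ext x
      rw [hh, smul_apply, SchwartzMap.smulLeftCLM_apply_apply (mvpoly_hasTemperateGrowth q),
        gaussSchwartz_apply, hermiteFunMulti]
      simp only [hermiteFun_eq, Finset.prod_mul_distrib]
      have e1 : ∏ i, Real.exp (-(x i ^ 2 / 4)) = Real.exp (-(‖x‖ ^ 2 / 4)) := by
        rw [← Real.exp_sum, EuclideanSpace.real_norm_sq_eq, Finset.sum_neg_distrib, Finset.sum_div]
      have e2 : MvPolynomial.eval (fun i => x i) q = ∏ i, (hermiteSeq (β i)).eval (x i) := by
        simp only [q, map_prod]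
        refine Finset.prod_congr rfl fun i _ => ?_
        rw [← MvPolynomial.coe_aeval_eq_eval, RingHom.coe_coe, ← Polynomial.aeval_algHom_apply]
        simp
      rw [e1, e2, smul_eq_mul, smul_eq_mul]
      ring
    have h2 := hU β
    rw [e, map_smul, smul_eq_mul] at h2
    exact (mul_eq_zero.1 h2).resolve_left hc
  refine eq_zero_of_gauss_diag U fun n M => ?_
  let b : Fin d → EuclideanSpace ℝ (Fin d) := fun i => EuclideanSpace.basisFun (Fin d) ℝ i
  let q : MvPolynomial (Fin d) ℝ := ∑ s : Fin n → Fin d,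
    MvPolynomial.C (M fun j => b (s j)) * ∏ j, MvPolynomial.X (s j)
  have hq : (fun y => M fun _ => y) = fun x : EuclideanSpace ℝ (Fin d) =>
      MvPolynomial.eval (fun i => x i) q := by
    ext x
    have hx : x = ∑ i, x i • b i := by
      have := (EuclideanSpace.basisFun (Fin d) ℝ).sum_repr x
      simpa [b] using this.symm
    calc (M fun _ => x) = M fun _ => ∑ i, x i • b i := by rw [← hx]
      _ = _ := by
        rw [M.map_sum]
        simp only [M.map_smul_univ, q, map_sum, map_mul, map_prod, MvPolynomial.eval_C,
          MvPolynomial.eval_X, smul_eq_mul, mul_comm]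
  rw [hq]
  exact congrArg (fun l => l q) hpoly
end
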